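/- arXiv:1706.00873 — 2 statements merged into one kernel-verified Lean document; each statement's English description precedes it below -/
import Mathlib

section
/- Let κ > 0, η̄ > 0, ρ̄ ∈ ℝ, and ξ ∈ ℂ. Set β := κ + i ρ̄ η̄ ξ, let d ∈ ℂ satisfy d² = η̄²(ξ² − iξ) + β², and assume d ≠ 0 and β − d ≠ 0. Set g := (β + d)/(β − d) and define D : ℝ → ℂ by D(τ) := ((β + d)/η̄²)·(1 − e^{dτ})/(1 − g e^{dτ}). Then D(0) = 0, and for every τ ∈ ℝ with 1 − g e^{dτ} ≠ 0, D is differentiable at τ and satisfies the Riccati equation D'(τ) = ½(−ξ² + iξ) − β D(τ) + ½ η̄² D(τ)². -/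
open Complex

/-!
The right-hand side of the Riccati equation is `½η̄² (D - r)(D - s)` with roots
`r = (β + d)/η̄²` and `s = (β - d)/η̄²`. The ratio `(D - r)/(D - s)` therefore satisfies the linear
equation with rate `½η̄² (r - s) = d`, and it starts at `r/s = g` when `D(0) = 0`. Solving
`(D - r)/(D - s) = g e^{dτ}` for `D` gives the closed formula.
-/

theorem quadratic_eq_mul_sub_mul_sub {K : Type*} [Field K] [NeZero (2 : K)] {a b c δ : K}
    (ha : a ≠ 0) (hδ : discrim a b c = δ * δ) (x : K) :
    a * (x * x) + b * x + c = a * (x - (-b + δ) / (2 * a)) * (x - (-b - δ) / (2 * a)) := by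
  have h2 : (2 : K) ≠ 0 := two_ne_zero
  field_simp
  rw [discrim] at hδ
  linear_combination -hδ

/-- The Möbius function of `E` taking the values `0` at `E = 1`, `r` at `E = 0` and `r / g` at
`E = ∞`. Composed with an exponential `E` of suitable rate, it gives the solution of a Riccati
equation with stationary points `r` and `r / g`. At the pole `g * E = 1` it is `0`. -/
def riccatiMobius {K : Type*} [Field K] (r g E : K) : K :=
  r * (1 - E) / (1 - g * E)

namespace riccatiMobius

section Field

variable {K : Type*} [Field K] {r s g E : K}

theorem apply_one (r g : K) : riccatiMobius r g 1 = 0 := by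
  simp [riccatiMobius]

theorem sub_left (hE : 1 - g * E ≠ 0) :
    riccatiMobius r g E - r = r * (g - 1) * E / (1 - g * E) := by
  rw [riccatiMobius, div_sub' hE]
  ring

theorem sub_right (hrs : r = g * s) (hE : 1 - g * E ≠ 0) :
    riccatiMobius r g E - s = (r - s) / (1 - g * E) := by
  rw [riccatiMobius, div_sub' hE]
  congr 1
  linear_combination -E * hrs

end Field

section Deriv

variable {𝕜 A : Type*} [NontriviallyNormedField 𝕜] [NontriviallyNormedField A] [NormedAlgebra 𝕜 A]
  {E : 𝕜 → A} {E' r s g a : A} {x : 𝕜}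

theorem hasDerivAt_comp (hE : HasDerivAt E E' x) (hx : 1 - g * E x ≠ 0) :
    HasDerivAt (fun t => riccatiMobius r g (E t)) (r * (g - 1) * E' / (1 - g * E x) ^ 2) x := by
  have hquot := ((hE.const_sub 1).const_mul r).fun_div ((hE.const_mul g).const_sub 1) hx
  refine hquot.congr_deriv ?_
  ring

theorem hasDerivAt_comp_of_exponential (hrs : r = g * s)
    (hE : HasDerivAt E (a * (r - s) * E x) x) (hx : 1 - g * E x ≠ 0) :
    HasDerivAt (fun t => riccatiMobius r g (E t))
      (a * (riccatiMobius r g (E x) - r) * (riccatiMobius r g (E x) - s)) x := by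
  refine (hasDerivAt_comp hE hx).congr_deriv ?_
  rw [sub_left hx, sub_right hrs hx]
  field_simp

theorem hasDerivAt_comp_of_discrim [NeZero (2 : A)] {b c δ : A} (ha : a ≠ 0)
    (hδ : discrim a b c = δ * δ) (hr : r = (-b + δ) / (2 * a)) (hg : -b + δ = g * (-b - δ))
    (hE : HasDerivAt E (δ * E x) x) (hx : 1 - g * E x ≠ 0) :
    HasDerivAt (fun t => riccatiMobius r g (E t))
      (a * (riccatiMobius r g (E x) * riccatiMobius r g (E x)) +
        b * riccatiMobius r g (E x) + c) x := by
  have hroots : r = g * ((-b - δ) / (2 * a)) := by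
    rw [hr, hg, mul_div_assoc]
  have hrate : a * (r - (-b - δ) / (2 * a)) = δ := by
    have h2 : (2 : A) ≠ 0 := two_ne_zero
    rw [hr]
    field_simp
    ring
  rw [quadratic_eq_mul_sub_mul_sub ha hδ, ← hr]
  exact hasDerivAt_comp_of_exponential hroots (by rwa [hrate]) hx

end Deriv

end riccatiMobius

theorem heston_riccati_D_general {η ξ β d g : ℂ} (hη : η ≠ 0)
    (hd : d ^ 2 = η ^ 2 * (ξ ^ 2 - I * ξ) + β ^ 2) (hβd : β - d ≠ 0) (hg : g = (β + d) / (β - d))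
    {D : ℂ → ℂ}
    (hD : D = fun z => ((β + d) / η ^ 2) * (1 - exp (d * z)) / (1 - g * exp (d * z))) :
    D 0 = 0 ∧ ∀ z, 1 - g * exp (d * z) ≠ 0 →
      HasDerivAt D ((1 / 2) * (-ξ ^ 2 + I * ξ) - β * D z + (1 / 2) * η ^ 2 * D z ^ 2) z := by
  have hlead : η ^ 2 / 2 ≠ 0 := div_ne_zero (pow_ne_zero 2 hη) two_ne_zero
  have hdiscr : discrim (η ^ 2 / 2) (-β) ((1 / 2) * (-ξ ^ 2 + I * ξ)) = d * d := by
    rw [discrim]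
    linear_combination -hd
  have hroot : (β + d) / η ^ 2 = (-(-β) + d) / (2 * (η ^ 2 / 2)) := by
    rw [neg_neg, mul_div_cancel₀ _ two_ne_zero]
  have hratio : -(-β) + d = g * (-(-β) - d) := by
    rw [neg_neg, hg, div_mul_cancel₀ _ hβd]
  have hexp (z : ℂ) : HasDerivAt (fun w => exp (d * w)) (d * exp (d * z)) z := by
    simpa [mul_comm] using ((hasDerivAt_id z).const_mul d).cexp
  replace hD : D = fun z => riccatiMobius ((β + d) / η ^ 2) g (exp (d * z)) := hD
  subst hD
  refine ⟨by simp only [mul_zero, exp_zero, riccatiMobius.apply_one], fun z hz => ?_⟩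
  refine (riccatiMobius.hasDerivAt_comp_of_discrim hlead hdiscr hroot hratio (hexp z)
    hz).congr_deriv ?_
  ring

/-- The Heston Riccati exponent: `D(τ) = ((β+d)/η̄²)(1 - e^{dτ})/(1 - g e^{dτ})`
satisfies `D(0) = 0` and the Riccati ODE
`D' = ½(-ξ² + iξ) - βD + ½η̄²D²` wherever `1 - g e^{dτ} ≠ 0`. -/
theorem heston_riccati_D (κ ηb ρb : ℝ) (hκ : 0 < κ) (hηb : 0 < ηb) (ξ β d : ℂ)
    (hβ : β = (κ : ℂ) + I * (ρb : ℂ) * (ηb : ℂ) * ξ)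
    (hd : d ^ 2 = (ηb : ℂ) ^ 2 * (ξ ^ 2 - I * ξ) + β ^ 2)
    (hd0 : d ≠ 0) (hβd : β - d ≠ 0)
    (g : ℂ) (hg : g = (β + d) / (β - d))
    (D : ℝ → ℂ)
    (hD : D = fun τ : ℝ => ((β + d) / (ηb : ℂ) ^ 2) *
      (1 - Complex.exp (d * (τ : ℂ))) / (1 - g * Complex.exp (d * (τ : ℂ)))) :
    D 0 = 0 ∧
      ∀ τ : ℝ, 1 - g * Complex.exp (d * (τ : ℂ)) ≠ 0 →
        HasDerivAt D
          ((1 / 2) * (-ξ ^ 2 + I * ξ) - β * D τ + (1 / 2) * (ηb : ℂ) ^ 2 * (D τ) ^ 2) τ := by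
  subst hD
  obtain ⟨hzero, hderiv⟩ := heston_riccati_D_general (ofReal_ne_zero.2 hηb.ne') hd hβd hg rfl
  exact ⟨mod_cast hzero, fun τ hτ => (hderiv τ hτ).comp_ofReal⟩
end

section
/- Let κ, m ∈ ℝ, η̄ > 0, β ∈ ℂ, ξ ∈ ℂ, and V₁₂, V₂₁, V₀₃ ∈ ℂ. Let C, D : ℝ → ℂ be differentiable with D'(τ) = ½(−ξ² + iξ) − βD(τ) + ½η̄²D(τ)² and C'(τ) = κmD(τ) for all τ, and set G(τ, v) := exp(C(τ) + vD(τ)). Let f₀, f₁ : ℝ → ℂ be differentiable with f₁'(τ) = (η̄²D(τ) − β) f₁(τ) − iξ V₁₂ D(τ)² − ξ² V₂₁ D(τ) + V₀₃ D(τ)³, f₀'(τ) = κm f₁(τ), and f₀(0) = f₁(0) = 0. Define P(τ, v) := (f₀(τ) + v f₁(τ)) G(τ, v). Then P(0, v) = 0 for all v, and for every (τ, v) ∈ ℝ × ℝ, −∂P/∂τ + ½v(−ξ² + iξ)P + (κm − βv)∂P/∂v + ½η̄²v ∂²P/∂v² = −v(−iξ V₁₂ D(τ)² − ξ² V₂₁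 D(τ) + V₀₃ D(τ)³) G(τ, v). -/
open Complex

/-!
Because `v` multiplies both the potential and the diffusion coefficient of the Heston operator, the
Riccati system for `(C, D)` says exactly that the operator annihilates `G = exp (C + v D)`. By the
Leibniz rule, applying it to `h * G` amounts to applying to `h` the operator without its potential
but with the extra drift `η² v D`. For `h = f₀ + v f₁` the second `v`-derivative vanishes, so the
result is affine in `v`, and the linear ODEs for `f₀` and `f₁` match its two coefficients with those
of the source.
-/

lemma deriv_deriv_fun_mul {𝕜 𝔸 : Type*} [NontriviallyNormedField 𝕜] [NormedRing 𝔸]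
    [NormedAlgebra 𝕜 𝔸] {f g : 𝕜 → 𝔸} {x : 𝕜} (hf : ContDiffAt 𝕜 2 f x)
    (hg : ContDiffAt 𝕜 2 g x) :
    deriv (deriv fun y ↦ f y * g y) x =
      f x * deriv (deriv g) x + 2 * deriv f x * deriv g x + deriv (deriv f) x * g x := by
  simpa [Finset.sum_range_succ, iteratedDeriv_eq_iterate] using iteratedDeriv_fun_mul hf hg

lemma hasDerivAt_const_add_ofReal_mul (a b : ℂ) (v : ℝ) :
    HasDerivAt (fun x : ℝ ↦ a + x * b) b v := by
  simpa using ((ofRealCLM.hasDerivAt (x := v)).mul_const b).const_add a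

lemma contDiff_const_add_ofReal_mul (a b : ℂ) {n : WithTop ℕ∞} :
    ContDiff ℝ n fun x : ℝ ↦ a + x * b :=
  contDiff_const.add (ofRealCLM.contDiff.mul contDiff_const)

/-- The Fourier-transformed Heston operator
`-∂_τ + ½ q v + (θ - β v) ∂_v + ½ η² v ∂²_v`. The paper has `q = -ξ² + iξ` and `θ = κ m`; the
potential `q` is a separate argument so that `q = 0` gives the part without zeroth-order term. -/
noncomputable def hestonOperator (q θ β η : ℂ) (h : ℝ → ℝ → ℂ) (τ v : ℝ) : ℂ :=
  -deriv (fun t ↦ h t v) τ + (1 / 2) * v * q * h τ v + (θ - β * v) * deriv (h τ) v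
    + (1 / 2) * η ^ 2 * v * deriv (deriv (h τ)) v

/-- The exponential-affine Heston kernel `G(τ, v) = exp (C(τ) + v D(τ))`. -/
noncomputable def hestonKernel (C D : ℝ → ℂ) (τ v : ℝ) : ℂ :=
  exp (C τ + v * D τ)

lemma hestonOperator_mul (q θ β η : ℂ) {h g : ℝ → ℝ → ℂ} {τ v : ℝ}
    (hhτ : DifferentiableAt ℝ (fun t ↦ h t v) τ) (hgτ : DifferentiableAt ℝ (fun t ↦ g t v) τ)
    (hhv : ContDiffAt ℝ 2 (h τ) v) (hgv : ContDiffAt ℝ 2 (g τ) v) :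
    hestonOperator q θ β η (fun t x ↦ h t x * g t x) τ v =
      hestonOperator 0 θ β η h τ v * g τ v + h τ v * hestonOperator q θ β η g τ v
        + η ^ 2 * v * deriv (h τ) v * deriv (g τ) v := by
  have hd : deriv (fun x ↦ h τ x * g τ x) v = deriv (h τ) v * g τ v + h τ v * deriv (g τ) v :=
    deriv_fun_mul (hhv.differentiableAt two_ne_zero) (hgv.differentiableAt two_ne_zero)
  simp only [hestonOperator, deriv_fun_mul hhτ hgτ, hd, deriv_deriv_fun_mul hhv hgv]
  ring

lemma hasDerivAt_hestonKernel_time {C D : ℝ → ℂ} {C' D' : ℂ} {τ : ℝ} (hC : HasDerivAt C C' τ)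
    (hD : HasDerivAt D D' τ) (v : ℝ) :
    HasDerivAt (fun t ↦ hestonKernel C D t v) (hestonKernel C D τ v * (C' + v * D')) τ :=
  (hC.add (hD.const_mul (v : ℂ))).cexp

lemma contDiff_hestonKernel (C D : ℝ → ℂ) (τ : ℝ) {n : WithTop ℕ∞} :
    ContDiff ℝ n (hestonKernel C D τ) :=
  (contDiff_const_add_ofReal_mul (C τ) (D τ)).cexp

lemma deriv_hestonKernel (C D : ℝ → ℂ) (τ : ℝ) :
    deriv (hestonKernel C D τ) = fun v ↦ hestonKernel C D τ v * D τ :=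
  funext fun v ↦ (hasDerivAt_const_add_ofReal_mul (C τ) (D τ) v).cexp.deriv

lemma hestonOperator_hestonKernel (q θ β η : ℂ) {C D : ℝ → ℂ} {τ : ℝ}
    (hD : HasDerivAt D ((1 / 2) * q - β * D τ + (1 / 2) * η ^ 2 * D τ ^ 2) τ)
    (hC : HasDerivAt C (θ * D τ) τ) (v : ℝ) :
    hestonOperator q θ β η (hestonKernel C D) τ v = 0 := by
  simp only [hestonOperator, (hasDerivAt_hestonKernel_time hC hD v).deriv, deriv_hestonKernel,
    deriv_mul_const_field]
  ring

lemma hestonOperator_affine (θ β η : ℂ) {f₀ f₁ : ℝ → ℂ} {f₀' f₁' : ℂ} {τ : ℝ}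
    (hf₀ : HasDerivAt f₀ f₀' τ) (hf₁ : HasDerivAt f₁ f₁' τ) (v : ℝ) :
    hestonOperator 0 θ β η (fun t x ↦ f₀ t + x * f₁ t) τ v =
      -(f₀' + v * f₁') + (θ - β * v) * f₁ τ := by
  have hτ : deriv (fun t ↦ f₀ t + v * f₁ t) τ = f₀' + v * f₁' :=
    (hf₀.add (hf₁.const_mul (v : ℂ))).deriv
  have hv : deriv (fun x : ℝ ↦ f₀ τ + x * f₁ τ) = fun _ ↦ f₁ τ :=
    funext fun x ↦ (hasDerivAt_const_add_ofReal_mul (f₀ τ) (f₁ τ) x).deriv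
  simp only [hestonOperator, hτ, hv, deriv_const]
  ring

lemma hestonOperator_affine_mul_hestonKernel (q θ β η : ℂ) {C D f₀ f₁ : ℝ → ℂ} {f₀' f₁' : ℂ}
    {τ : ℝ} (hD : HasDerivAt D ((1 / 2) * q - β * D τ + (1 / 2) * η ^ 2 * D τ ^ 2) τ)
    (hC : HasDerivAt C (θ * D τ) τ) (hf₀ : HasDerivAt f₀ f₀' τ) (hf₁ : HasDerivAt f₁ f₁' τ)
    (v : ℝ) :
    hestonOperator q θ β η (fun t x ↦ (f₀ t + x * f₁ t) * hestonKernel C D t x) τ v =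
      (θ * f₁ τ - f₀' + v * ((η ^ 2 * D τ - β) * f₁ τ - f₁')) * hestonKernel C D τ v := by
  rw [hestonOperator_mul q θ β η (h := fun t x ↦ f₀ t + x * f₁ t)
      (hf₀.add (hf₁.const_mul (v : ℂ))).differentiableAt
      (hasDerivAt_hestonKernel_time hC hD v).differentiableAt
      (contDiff_const_add_ofReal_mul (f₀ τ) (f₁ τ)).contDiffAt
      (contDiff_hestonKernel C D τ).contDiffAt,
    hestonOperator_affine θ β η hf₀ hf₁, hestonOperator_hestonKernel q θ β η hD hC,
    (hasDerivAt_const_add_ofReal_mul (f₀ τ) (f₁ τ) v).deriv, deriv_hestonKernel]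
  ring

theorem heston_fast_scale_correction_general (q θ β η : ℂ) {C D f₀ f₁ S : ℝ → ℂ}
    (hD : ∀ τ, HasDerivAt D ((1 / 2) * q - β * D τ + (1 / 2) * η ^ 2 * D τ ^ 2) τ)
    (hC : ∀ τ, HasDerivAt C (θ * D τ) τ)
    (hf₁ : ∀ τ, HasDerivAt f₁ ((η ^ 2 * D τ - β) * f₁ τ + S τ) τ)
    (hf₀ : ∀ τ, HasDerivAt f₀ (θ * f₁ τ) τ) (hf₀0 : f₀ 0 = 0) (hf₁0 : f₁ 0 = 0) :
    (∀ v : ℝ, (f₀ 0 + v * f₁ 0) * hestonKernel C D 0 v = 0) ∧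
      ∀ τ v : ℝ,
        hestonOperator q θ β η (fun t x ↦ (f₀ t + x * f₁ t) * hestonKernel C D t x) τ v =
          -v * S τ * hestonKernel C D τ v := by
  refine ⟨fun v ↦ by simp [hf₀0, hf₁0], fun τ v ↦ ?_⟩
  rw [hestonOperator_affine_mul_hestonKernel q θ β η (hD τ) (hC τ) (hf₀ τ) (hf₁ τ)]
  ring

/-- The fast-scale correction ansatz `P(τ,v) = (f₀(τ) + v f₁(τ)) G(τ,v)` solves the
sourced Fourier-transformed Heston PDE
`-∂_τ P + ½v(-ξ²+iξ)P + (κm - βv)∂_v P + ½η̄²v ∂²_v P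
  = -v(-iξV₁₂D² - ξ²V₂₁D + V₀₃D³)G`
with zero initial condition, when `f₀, f₁` solve the stated linear ODE system. -/
theorem heston_fast_scale_correction (κ m ηb : ℝ) (hηb : 0 < ηb) (β ξ V₁₂ V₂₁ V₀₃ : ℂ)
    (C D : ℝ → ℂ)
    (hD : ∀ τ : ℝ, HasDerivAt D
      ((1 / 2) * (-ξ ^ 2 + I * ξ) - β * D τ + (1 / 2) * (ηb : ℂ) ^ 2 * (D τ) ^ 2) τ)
    (hC : ∀ τ : ℝ, HasDerivAt C ((κ : ℂ) * (m : ℂ) * D τ) τ)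
    (G : ℝ → ℝ → ℂ)
    (hG : G = fun (τ v : ℝ) => Complex.exp (C τ + (v : ℂ) * D τ))
    (f₀ f₁ : ℝ → ℂ)
    (hf₁ : ∀ τ : ℝ, HasDerivAt f₁
      (((ηb : ℂ) ^ 2 * D τ - β) * f₁ τ
        - I * ξ * V₁₂ * (D τ) ^ 2 - ξ ^ 2 * V₂₁ * D τ + V₀₃ * (D τ) ^ 3) τ)
    (hf₀ : ∀ τ : ℝ, HasDerivAt f₀ ((κ : ℂ) * (m : ℂ) * f₁ τ) τ)
    (hf₀0 : f₀ 0 = 0) (hf₁0 : f₁ 0 = 0)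
    (P : ℝ → ℝ → ℂ)
    (hP : P = fun (τ v : ℝ) => (f₀ τ + (v : ℂ) * f₁ τ) * G τ v) :
    (∀ v : ℝ, P 0 v = 0) ∧
      ∀ τ v : ℝ,
        -deriv (fun τ' : ℝ => P τ' v) τ
        + (1 / 2) * (v : ℂ) * (-ξ ^ 2 + I * ξ) * P τ v
        + ((κ : ℂ) * (m : ℂ) - β * (v : ℂ)) * deriv (fun v' : ℝ => P τ v') v
        + (1 / 2) * (ηb : ℂ) ^ 2 * (v : ℂ) *
            deriv (fun v' : ℝ => deriv (fun v'' : ℝ => P τ v'') v') v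
        = -(v : ℂ) * (-I * ξ * V₁₂ * (D τ) ^ 2 - ξ ^ 2 * V₂₁ * D τ + V₀₃ * (D τ) ^ 3)
            * G τ v := by
  subst hG hP
  exact heston_fast_scale_correction_general (-ξ ^ 2 + I * ξ) (κ * m) β ηb hD hC
    (fun τ ↦ (hf₁ τ).congr_deriv (by ring)) hf₀ hf₀0 hf₁0
end
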